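/- The minimum of UB over the probability simplex is attained among the equalizing points of the top-k contest sets: min_{p ∈ Δ} UB(p) = min_{k ∈ {1,…,C}} UB(q([k])). -/

import Mathlib

open Finset

noncomputable section

/-- The upper-bound objective `UB(p)`. -/
def UB (C : ℕ) (v : Fin C → ℝ) (X Y : ℝ) (p : Fin C → ℝ) : ℝ :=
  if Y / X * (∑ c, v c * p c) ≤ ⨆ c, v c * p c then
    1 - Y / (2 * X) * (∑ c, v c * p c) ^ 2 / (⨆ c, v c * p c)
  else
    1 - (∑ c, v c * p c) + X / (2 * Y) * (⨆ c, v c * p c)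

/-- The equalizing point `q(S)` of a subset `S` of contests. -/
def qvec (C : ℕ) (v : Fin C → ℝ) (S : Finset (Fin C)) : Fin C → ℝ :=
  fun c => if c ∈ S then
    (∏ j ∈ S.erase c, v j) / (∑ l ∈ S, ∏ j ∈ S.erase l, v j)
  else 0

/-- The top `k` contests in value, `[k] = {1,…,k}`. -/
def topk (C k : ℕ) : Finset (Fin C) := Finset.univ.filter (fun c => (c : ℕ) < k)

/-!
For `t ≤ 1` put `F_t(p) = 1 - t vᵀp + t² (X / 2Y) max_c v_c p_c`. Minimizing this quadratic
over `t` gives `UB(p) = min_t F_t(p)`, so it is enough to bound each `F_t` from below.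

Let `L ≤ 1` be a lower bound of `F_t` on all `q([k])` and put `w_c = v_c p_c`, `m = max_c w_c`,
`a_c = t - (1 - L) / v_c`. As `∑ p_c = 1`, the inequality `L ≤ F_t(p)` reads
`∑ w_c a_c ≤ m t² X / 2Y`. Since `0 ≤ w_c ≤ m`, the left side is at most `m` times the sum of the
positive `a_c`. The sequence `a` is antitone, so its positive terms are those indexed by some `[k]`,
and `∑_{c ∈ [k]} a_c ≤ t² X / 2Y` is exactly `L ≤ F_t(q([k]))`.
-/

section OrderedSums

variable {ι M R : Type*}

lemma eq_Iic_max'_of_isLowerSet [LinearOrder ι] [LocallyFiniteOrderBot ι] {s : Finset ι}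
    (hs : IsLowerSet (s : Set ι)) (hne : s.Nonempty) : s = Iic (s.max' hne) := by
  ext i
  exact ⟨fun hi => mem_Iic.2 (s.le_max' i hi), fun hi => hs (mem_Iic.1 hi) (s.max'_mem hne)⟩

lemma sum_filter_pos_le_of_antitone [AddCommMonoid M] [LinearOrder M] [LinearOrder ι]
    [LocallyFiniteOrderBot ι] [Fintype ι] {a : ι → M} {b : M} (ha : Antitone a) (hb : 0 ≤ b)
    (hab : ∀ i, ∑ j ∈ Iic i, a j ≤ b) :
    ∑ i with 0 < a i, a i ≤ b := by
  have hlower : IsLowerSet ((univ.filter fun i => 0 < a i : Finset ι) : Set ι) := by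
    intro i j hji hi
    rw [mem_coe, mem_filter_univ] at hi ⊢
    exact hi.trans_le (ha hji)
  rcases (univ.filter fun i => 0 < a i).eq_empty_or_nonempty with hempty | hne
  · rwa [hempty, sum_empty]
  · rw [eq_Iic_max'_of_isLowerSet hlower hne]
    exact hab _

lemma sum_mul_le_mul_sum_filter_pos [Ring R] [LinearOrder R] [IsOrderedRing R]
    (s : Finset ι) {w a : ι → R} {m : R} (hw : ∀ i ∈ s, 0 ≤ w i) (hwm : ∀ i ∈ s, w i ≤ m) :
    ∑ i ∈ s, w i * a i ≤ m * ∑ i ∈ s with 0 < a i, a i := by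
  rw [sum_filter, mul_sum]
  refine sum_le_sum fun i hi => ?_
  split_ifs with hai
  · exact mul_le_mul_of_nonneg_right (hwm i hi) hai.le
  · rw [mul_zero]
    exact mul_nonpos_of_nonneg_of_nonpos (hw i hi) (not_lt.1 hai)

end OrderedSums

variable {C : ℕ} {v p : Fin C → ℝ} {S : Finset (Fin C)} {X Y t L : ℝ}

section EqualizingPoint

lemma topk_succ (i : Fin C) : topk C (i + 1) = Iic i := by
  ext j
  rw [topk, mem_filter_univ, mem_Iic, Fin.le_def, Nat.lt_succ_iff]

lemma sum_inv_pos (hv : ∀ c, 0 < v c) (hS : S.Nonempty) : 0 < ∑ c ∈ S, (v c)⁻¹ :=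
  sum_pos (fun c _ => inv_pos.2 (hv c)) hS

lemma qvec_eq_inv_div_sum_inv (hv : ∀ c, v c ≠ 0) (c : Fin C) :
    qvec C v S c = if c ∈ S then (v c)⁻¹ / ∑ l ∈ S, (v l)⁻¹ else 0 := by
  have hprod : ∀ l ∈ S, ∏ j ∈ S.erase l, v j = (∏ j ∈ S, v j) * (v l)⁻¹ := fun l hl => by
    rw [← prod_erase_mul S v hl, mul_inv_cancel_right₀ (hv l)]
  unfold qvec
  split_ifs with hc
  · rw [sum_congr rfl hprod, ← mul_sum, hprod c hc]
    exact mul_div_mul_left _ _ (prod_ne_zero_iff.2 fun j _ => hv j)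
  · rfl

lemma mul_qvec (hv : ∀ c, v c ≠ 0) (c : Fin C) :
    v c * qvec C v S c = if c ∈ S then (∑ l ∈ S, (v l)⁻¹)⁻¹ else 0 := by
  rw [qvec_eq_inv_div_sum_inv hv, mul_ite, mul_zero, div_eq_mul_inv, mul_inv_cancel_left₀ (hv c)]

lemma sum_mul_qvec (hv : ∀ c, v c ≠ 0) :
    ∑ c, v c * qvec C v S c = #S / ∑ c ∈ S, (v c)⁻¹ := by
  simp only [mul_qvec hv, sum_ite_mem, univ_inter, sum_const, nsmul_eq_mul, div_eq_mul_inv]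

lemma iSup_mul_qvec (hv : ∀ c, 0 < v c) (hS : S.Nonempty) :
    ⨆ c, v c * qvec C v S c = (∑ c ∈ S, (v c)⁻¹)⁻¹ := by
  obtain ⟨i, hi⟩ := id hS
  have : Nonempty (Fin C) := ⟨i⟩
  simp only [mul_qvec fun c => (hv c).ne']
  refine ciSup_eq_of_forall_le_of_forall_lt_exists_gt (fun c => ?_) fun _ hlt => ⟨i, by simpa [hi]⟩
  split_ifs
  · rfl
  · exact (inv_pos.2 (sum_inv_pos hv hS)).le

lemma qvec_mem_stdSimplex (hv : ∀ c, 0 < v c) (hS : S.Nonempty) :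
    qvec C v S ∈ stdSimplex ℝ (Fin C) := by
  have hA := sum_inv_pos hv hS
  have hq := qvec_eq_inv_div_sum_inv (S := S) fun c => (hv c).ne'
  refine ⟨fun c => ?_, ?_⟩
  · rw [hq]
    split_ifs
    · exact div_nonneg (inv_pos.2 (hv c)).le hA.le
    · rfl
  · rw [sum_congr rfl fun c _ => hq c, sum_ite_mem, univ_inter, ← sum_div, div_self hA.ne']

end EqualizingPoint

lemma mul_le_iSup_mul (v p : Fin C → ℝ) (c : Fin C) : v c * p c ≤ ⨆ c, v c * p c :=
  le_ciSup (f := fun c => v c * p c) (Set.finite_range _).bddAbove c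

lemma iSup_mul_pos (hv : ∀ c, 0 < v c) (hp : p ∈ stdSimplex ℝ (Fin C)) :
    0 < ⨆ c, v c * p c := by
  obtain ⟨c, -, hc⟩ : ∃ c ∈ univ, 0 < p c :=
    exists_lt_of_sum_lt (by simp [hp.2])
  exact (mul_pos (hv c) hc).trans_le (mul_le_iSup_mul v p c)

/-- The function `F_t(p) = 1 - t vᵀp + t² (X / 2Y) max_c v_c p_c`, whose minimum over `t ≤ 1`
is `UB(p)` for `p` in the simplex. It replaces the case distinction in `UB` by the parameter `t`. -/
def quadUB (C : ℕ) (v : Fin C → ℝ) (X Y t : ℝ) (p : Fin C → ℝ) : ℝ :=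
  1 - t * ∑ c, v c * p c + t ^ 2 * (X / (2 * Y)) * ⨆ c, v c * p c

section Variational

lemma UB_le_quadUB (hX : 0 < X) (hY : 0 < Y) (hm : 0 < ⨆ c, v c * p c) (ht : t ≤ 1) :
    UB C v X Y p ≤ quadUB C v X Y t p := by
  unfold UB quadUB
  set s := ∑ c, v c * p c
  set m := ⨆ c, v c * p c
  rw [← sub_nonneg]
  split_ifs with hsm
  · calc
      0 ≤ (t * X * m - Y * s) ^ 2 / (2 * X * Y * m) := by positivity
      _ = _ := by field_simp; ring
  · have hlt : X * m < Y * s := by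
      rwa [not_le, div_mul_eq_mul_div, lt_div_iff₀' hX] at hsm
    have hXm : 0 < X * m := mul_pos hX hm
    have hfactor : 0 ≤ 2 * (Y * s) - (1 + t) * (X * m) := by nlinarith
    calc
      0 ≤ (1 - t) * (2 * (Y * s) - (1 + t) * (X * m)) / (2 * Y) :=
        div_nonneg (mul_nonneg (sub_nonneg.2 ht) hfactor) (by positivity)
      _ = _ := by field_simp; ring

lemma UB_le_one (hX : 0 < X) (hY : 0 < Y) (hm : 0 < ⨆ c, v c * p c) : UB C v X Y p ≤ 1 := by
  simpa [quadUB] using UB_le_quadUB hX hY hm zero_le_one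

lemma exists_UB_eq_quadUB (hX : X ≠ 0) (hm : 0 < ⨆ c, v c * p c) :
    ∃ t ≤ 1, UB C v X Y p = quadUB C v X Y t p := by
  unfold UB quadUB
  set s := ∑ c, v c * p c
  set m := ⨆ c, v c * p c
  split_ifs with hsm
  · exact ⟨Y / X * s / m, (div_le_one hm).2 hsm, by field_simp; ring⟩
  · exact ⟨1, le_rfl, by ring⟩

end Variational

lemma quadUB_qvec (hv : ∀ c, 0 < v c) (hS : S.Nonempty) :
    quadUB C v X Y t (qvec C v S) =
      1 - (#S * t - t ^ 2 * (X / (2 * Y))) / ∑ c ∈ S, (v c)⁻¹ := by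
  rw [quadUB, sum_mul_qvec fun c => (hv c).ne', iSup_mul_qvec hv hS]
  ring

lemma le_quadUB_qvec_iff (hv : ∀ c, 0 < v c) (hS : S.Nonempty) :
    L ≤ quadUB C v X Y t (qvec C v S) ↔
      ∑ c ∈ S, (t - (1 - L) * (v c)⁻¹) ≤ t ^ 2 * (X / (2 * Y)) := by
  rw [quadUB_qvec hv hS, le_sub_comm, div_le_iff₀ (sum_inv_pos hv hS), sum_sub_distrib, sum_const,
    nsmul_eq_mul, ← mul_sum, sub_le_comm]

lemma le_quadUB_iff (hv : ∀ c, v c ≠ 0) (hp : ∑ c, p c = 1) :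
    L ≤ quadUB C v X Y t p ↔
      ∑ c, v c * p c * (t - (1 - L) * (v c)⁻¹) ≤
        (⨆ c, v c * p c) * (t ^ 2 * (X / (2 * Y))) := by
  have hterm : ∀ c, v c * p c * (t - (1 - L) * (v c)⁻¹) = t * (v c * p c) - (1 - L) * p c :=
    fun c => by field_simp [hv c]
  simp only [hterm, sum_sub_distrib, ← mul_sum, hp, quadUB]
  constructor <;> intro h <;> linarith

lemma antitone_sub_mul_inv (hv : ∀ c, 0 < v c) (hanti : Antitone v) (hL : L ≤ 1) :
    Antitone fun c => t - (1 - L) * (v c)⁻¹ := fun _ j hij =>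
  sub_le_sub_left
    (mul_le_mul_of_nonneg_left (inv_anti₀ (hv j) (hanti hij)) (sub_nonneg.2 hL)) t

lemma le_quadUB_of_forall_le_quadUB_topk (hv : ∀ c, 0 < v c) (hanti : Antitone v)
    (hX : 0 ≤ X) (hY : 0 ≤ Y) (hL : L ≤ 1)
    (htop : ∀ i : Fin C, L ≤ quadUB C v X Y t (qvec C v (topk C (i + 1))))
    (hp : p ∈ stdSimplex ℝ (Fin C)) : L ≤ quadUB C v X Y t p := by
  have hIic : ∀ i, ∑ c ∈ Iic i, (t - (1 - L) * (v c)⁻¹) ≤ t ^ 2 * (X / (2 * Y)) := fun i =>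
    (le_quadUB_qvec_iff hv nonempty_Iic).1 (topk_succ i ▸ htop i)
  rw [le_quadUB_iff (fun c => (hv c).ne') hp.2]
  calc
    ∑ c, v c * p c * (t - (1 - L) * (v c)⁻¹)
      ≤ (⨆ c, v c * p c) * ∑ c with 0 < t - (1 - L) * (v c)⁻¹, (t - (1 - L) * (v c)⁻¹) :=
        sum_mul_le_mul_sum_filter_pos univ (fun c _ => mul_nonneg (hv c).le (hp.1 c))
          fun c _ => mul_le_iSup_mul v p c
    _ ≤ (⨆ c, v c * p c) * (t ^ 2 * (X / (2 * Y))) :=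
        mul_le_mul_of_nonneg_left
          (sum_filter_pos_le_of_antitone (antitone_sub_mul_inv hv hanti hL) (by positivity) hIic)
          (iSup_mul_pos hv hp).le

lemma qvec_topk_mem_stdSimplex (hv : ∀ c, 0 < v c) (i : Fin C) :
    qvec C v (topk C (i + 1)) ∈ stdSimplex ℝ (Fin C) :=
  qvec_mem_stdSimplex hv (topk_succ i ▸ nonempty_Iic)

lemma le_UB_of_forall_le_UB_topk (hC : 0 < C) (hv : ∀ c, 0 < v c) (hanti : Antitone v)
    (hX : 0 < X) (hY : 0 < Y)
    (htop : ∀ i : Fin C, L ≤ UB C v X Y (qvec C v (topk C (i + 1))))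
    (hp : p ∈ stdSimplex ℝ (Fin C)) : L ≤ UB C v X Y p := by
  have hm (i : Fin C) := iSup_mul_pos hv (qvec_topk_mem_stdSimplex hv i)
  have hL : L ≤ 1 := (htop ⟨0, hC⟩).trans (UB_le_one hX hY (hm _))
  obtain ⟨t, ht, hUB⟩ := exists_UB_eq_quadUB hX.ne' (iSup_mul_pos hv hp)
  rw [hUB]
  exact le_quadUB_of_forall_le_quadUB_topk hv hanti hX.le hY.le hL
    (fun i => (htop i).trans (UB_le_quadUB hX hY (hm i) ht)) hp

theorem min_UB_eq_min_topk_general (hC : 0 < C) (hv : ∀ c, 0 < v c) (hanti : Antitone v)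
    (hX : 0 < X) (hY : 0 < Y) :
    IsLeast (UB C v X Y '' stdSimplex ℝ (Fin C))
      (⨅ i : Fin C, UB C v X Y (qvec C v (topk C (i + 1)))) := by
  have : Nonempty (Fin C) := ⟨⟨0, hC⟩⟩
  constructor
  · obtain ⟨i, hi⟩ := exists_eq_ciInf_of_finite
      (f := fun i : Fin C => UB C v X Y (qvec C v (topk C (i + 1))))
    exact ⟨_, qvec_topk_mem_stdSimplex hv i, hi⟩
  · rintro _ ⟨p, hp, rfl⟩
    exact le_UB_of_forall_le_UB_topk hC hv hanti hX hY
      (ciInf_le (Set.finite_range _).bddBelow) hp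

/-- Lemma 3: the minimum of `UB` over the probability simplex equals the
minimum of `UB` over the equalizing points of the top-`k` contest sets, `k = 1,…,C`. -/
theorem min_UB_eq_min_topk (C : ℕ) (hC : 0 < C) (v : Fin C → ℝ)
    (hpos : ∀ c, 0 < v c) (hdec : StrictAnti v) (hsum : ∑ c, v c = 1)
    (X Y : ℝ) (hX : 0 < X) (hY : 0 < Y) :
    sInf (UB C v X Y '' stdSimplex ℝ (Fin C)) =
      ⨅ i : Fin C, UB C v X Y (qvec C v (topk C ((i : ℕ) + 1))) := by
  exact (min_UB_eq_min_topk_general hC hpos hdec.antitone hX hY).csInf_eq
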